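/- Let A be a commutative ring and 0 → U →^f V →^g W → 0 a split short exact sequence of A-modules in which U, V, and W are free. Then the sequence 0 → ⋀²_A U → U ⊗_A V → Sym²_A V → Sym²_A W → 0 is exact, where the first map sends u ∧ u' to u ⊗ f(u') − u' ⊗ f(u), the second map sends u ⊗ v to the class of f(u) ⊗ v in Sym²_A V, and the third map is induced by g ⊗ g. -/

import Mathlib

open scoped TensorProduct

/-- The `n`-th exterior power `⋀[A]^n M`, as a type. -/
def ExtPow (A : Type*) [CommRing A] (M : Type*) [AddCommGroup M] [Module A M]
    (n : ℕ) : Type _ := ↥(⋀[A]^n M)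

noncomputable instance (A : Type*) [CommRing A] (M : Type*) [AddCommGroup M] [Module A M]
    (n : ℕ) : AddCommGroup (ExtPow A M n) := inferInstanceAs (AddCommGroup ↥(⋀[A]^n M))

noncomputable instance (A : Type*) [CommRing A] (M : Type*) [AddCommGroup M] [Module A M]
    (n : ℕ) : Module A (ExtPow A M n) := inferInstanceAs (Module A ↥(⋀[A]^n M))

/-- The element `x₁ ∧ … ∧ xₙ` of the `n`-th exterior power `⋀[A]^n M`. -/
noncomputable def wedgeGen (A : Type*) [CommRing A] (M : Type*) [AddCommGroup M]
    [Module A M] (n : ℕ) (x : Fin n → M) : ExtPow A M n :=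
  ⟨ExteriorAlgebra.ιMulti A n x,
    ExteriorAlgebra.ιMulti_range A n (Set.mem_range_self x)⟩

/-- The second symmetric power of an `A`-module `V`: the quotient of `V ⊗_A V` by the
submodule generated by the elements `x ⊗ y − y ⊗ x`. -/
abbrev SymSq (A : Type*) [CommRing A] (V : Type*) [AddCommGroup V] [Module A V] :=
  (V ⊗[A] V) ⧸
    Submodule.span A {z : V ⊗[A] V | ∃ x y : V, z = x ⊗ₜ[A] y - y ⊗ₜ[A] x}

/-- The map `Sym² V → Sym² W` induced by `g ⊗ g` for a linear map `g : V → W`. -/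
noncomputable def symSqMap (A : Type*) [CommRing A] (V W : Type*)
    [AddCommGroup V] [Module A V] [AddCommGroup W] [Module A W] (g : V →ₗ[A] W) :
    SymSq A V →ₗ[A] SymSq A W :=
  Submodule.mapQ _ _ (TensorProduct.map g g)
    (Submodule.span_le.mpr (by
      rintro z ⟨x, y, rfl⟩
      simp only [SetLike.mem_coe, Submodule.mem_comap, map_sub, TensorProduct.map_tmul]
      exact Submodule.subset_span ⟨g x, g y, rfl⟩))

/-!
Injectivity on the left: totally ordering a basis and keeping only the upper triangular part writes
every alternating bilinear map on a free module, hence on a projective one, as `B - B.flip`. Applied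
to the wedge product, this gives a left inverse of `x ∧ y ↦ x ⊗ y - y ⊗ x`, a map which factors
through `⋀² U → U ⊗ V` by means of a retraction `r` of `f`.

Exactness at `U ⊗ V`: the map `v ⊗ v' ↦ r v ⊗ v' + r v' ⊗ (v - f (r v))` is a retraction of `f ⊗ V`
carrying `x ⊗ y - y ⊗ x` to the image of `r x ∧ r y`.

Exactness at `Sym² V` needs only right exactness: the kernel of `g ⊗ g` is generated by the images
of `U ⊗ V` and `V ⊗ U`, which coincide in `Sym² V`.
-/

section Alternating

variable {A M N : Type*} [CommRing A] [AddCommGroup M] [Module A M] [AddCommGroup N] [Module A N]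

theorem exists_sub_flip_eq_of_basis {ι : Type*} (b : Module.Basis ι A M)
    {φ : M →ₗ[A] M →ₗ[A] N} (hφ : φ.IsAlt) :
    ∃ B : M →ₗ[A] M →ₗ[A] N, B - B.flip = φ := by
  classical
  let _ : LinearOrder ι := linearOrderOfSTO WellOrderingRel
  let B : M →ₗ[A] M →ₗ[A] N :=
    b.constr A fun i => b.constr A fun j => if i < j then φ (b i) (b j) else 0
  have hB (i j : ι) : B (b i) (b j) = if i < j then φ (b i) (b j) else 0 := by
    simp only [B, Module.Basis.constr_basis]
  refine ⟨B, LinearMap.ext_basis b b fun i j => ?_⟩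
  simp only [LinearMap.sub_apply, LinearMap.flip_apply, hB]
  rcases lt_trichotomy i j with hij | rfl | hji
  · rw [if_pos hij, if_neg hij.not_gt, sub_zero]
  · rw [sub_self, hφ.self_eq_zero]
  · rw [if_neg hji.not_gt, if_pos hji, zero_sub, hφ.neg]

theorem exists_sub_flip_eq_of_projective [Module.Projective A M]
    {φ : M →ₗ[A] M →ₗ[A] N} (hφ : φ.IsAlt) :
    ∃ B : M →ₗ[A] M →ₗ[A] N, B - B.flip = φ := by
  obtain ⟨σ, hσ⟩ := Module.projective_def.mp ‹Module.Projective A M›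
  let π : (M →₀ A) →ₗ[A] M := Finsupp.linearCombination A id
  have hπ : (φ.compl₁₂ π π).IsAlt := fun x => hφ (π x)
  obtain ⟨B, hB⟩ := exists_sub_flip_eq_of_basis Finsupp.basisSingleOne hπ
  refine ⟨B.compl₁₂ σ σ, LinearMap.ext₂ fun x y => ?_⟩
  simpa only [LinearMap.sub_apply, LinearMap.flip_apply, LinearMap.compl₁₂_apply, π, hσ x, hσ y]
    using LinearMap.congr_fun₂ hB (σ x) (σ y)

end Alternating

namespace ExtPow

variable {A M N : Type*} [CommRing A] [AddCommGroup M] [Module A M] [AddCommGroup N] [Module A N]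

theorem hom_ext {φ ψ : ExtPow A M 2 →ₗ[A] N}
    (h : ∀ x y, φ (wedgeGen A M 2 ![x, y]) = ψ (wedgeGen A M 2 ![x, y])) : φ = ψ := by
  refine exteriorPower.linearMap_ext (R := A) (n := 2) (M := M) (AlternatingMap.ext fun v => ?_)
  have hv : v = ![v 0, v 1] := List.ofFn_inj.mp rfl
  rw [hv]
  exact h (v 0) (v 1)

variable (A M) in
/-- The wedge product `(x, y) ↦ x ∧ y` as a bilinear map, so that it can be compared with other
bilinear maps on `M`. -/
noncomputable def wedge : M →ₗ[A] M →ₗ[A] ExtPow A M 2 :=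
  let ι : M [⋀^Fin 2]→ₗ[A] ExtPow A M 2 := exteriorPower.ιMulti A 2
  LinearMap.mk₂ A (fun x y => wedgeGen A M 2 ![x, y])
    (fun x x' y => ι.map_vecCons_add ![y] x x')
    (fun c x y => ι.map_vecCons_smul ![y] c x)
    (fun x y y' => (ι.curryLeft x).map_vecCons_add ![] y y')
    (fun c x y => (ι.curryLeft x).map_vecCons_smul ![] c y)

theorem isAlt_wedge : (wedge A M).IsAlt := fun x =>
  (exteriorPower.ιMulti A 2 : M [⋀^Fin 2]→ₗ[A] ExtPow A M 2).map_eq_zero_of_eq ![x, x]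
    (i := 0) (j := 1) rfl (by decide)

theorem injective_of_apply_wedgeGen [Module.Projective A M]
    {δ : ExtPow A M 2 →ₗ[A] M ⊗[A] M}
    (hδ : ∀ x y, δ (wedgeGen A M 2 ![x, y]) = x ⊗ₜ y - y ⊗ₜ x) : Function.Injective δ := by
  obtain ⟨B, hB⟩ := exists_sub_flip_eq_of_projective (isAlt_wedge (A := A) (M := M))
  have hid : TensorProduct.lift B ∘ₗ δ = LinearMap.id := hom_ext fun x y => by
    rw [LinearMap.comp_apply, hδ, map_sub, TensorProduct.lift.tmul, TensorProduct.lift.tmul]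
    exact LinearMap.congr_fun₂ hB x y
  exact Function.LeftInverse.injective (LinearMap.congr_fun hid)

end ExtPow

namespace SymSq

variable {A U V W : Type*} [CommRing A] [AddCommGroup U] [Module A U]
  [AddCommGroup V] [Module A V] [AddCommGroup W] [Module A W]

variable (A V) in
/-- The submodule of `V ⊗ V` spanned by the commutators `x ⊗ y - y ⊗ x`, by which `SymSq A V` is
the quotient. -/
abbrev relations : Submodule A (V ⊗[A] V) :=
  Submodule.span A {z : V ⊗[A] V | ∃ x y : V, z = x ⊗ₜ[A] y - y ⊗ₜ[A] x}

theorem mkQ_tmul_comm (x y : V) :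
    (relations A V).mkQ (x ⊗ₜ y) = (relations A V).mkQ (y ⊗ₜ x) :=
  (Submodule.Quotient.eq _).mpr (Submodule.subset_span ⟨x, y, rfl⟩)

theorem map_relations {g : V →ₗ[A] W} (hg : Function.Surjective g) :
    (relations A V).map (TensorProduct.map g g) = relations A W := by
  rw [Submodule.map_span]
  congr 1
  ext z
  constructor
  · rintro ⟨_, ⟨x, y, rfl⟩, rfl⟩
    exact ⟨g x, g y, by simp⟩
  · rintro ⟨x', y', rfl⟩
    obtain ⟨x, rfl⟩ := hg x'
    obtain ⟨y, rfl⟩ := hg y'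
    exact ⟨_, ⟨x, y, rfl⟩, by simp⟩

theorem symSqMap_surjective {g : V →ₗ[A] W} (hg : Function.Surjective g) :
    Function.Surjective (symSqMap A V W g) := by
  rw [← LinearMap.range_eq_top, symSqMap, Submodule.range_mapQ,
    LinearMap.range_eq_top.mpr (TensorProduct.map_surjective hg hg), Submodule.map_top,
    Submodule.range_mkQ]

/-- The multiplication `u ⊗ v ↦ f u · v` from `U ⊗ V` to `Sym² V`, the middle map of the four-term
sequence. -/
noncomputable def mulLeft (f : U →ₗ[A] V) : U ⊗[A] V →ₗ[A] SymSq A V :=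
  (relations A V).mkQ ∘ₗ f.rTensor V

theorem range_mkQ_comp_lTensor (f : U →ₗ[A] V) :
    LinearMap.range ((relations A V).mkQ ∘ₗ f.lTensor V) = LinearMap.range (mulLeft f) := by
  have hcomm : mulLeft f ∘ₗ (TensorProduct.comm A V U).toLinearMap =
      (relations A V).mkQ ∘ₗ f.lTensor V :=
    TensorProduct.ext' fun v u => mkQ_tmul_comm (f u) v
  rw [← hcomm, LinearMap.range_comp_of_range_eq_top _ (TensorProduct.comm A V U).range]

theorem exact_mulLeft_symSqMap {f : U →ₗ[A] V} {g : V →ₗ[A] W} (hfg : Function.Exact f g)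
    (hg : Function.Surjective g) : Function.Exact (mulLeft f) (symSqMap A V W g) := by
  rw [LinearMap.exact_iff]
  calc LinearMap.ker (symSqMap A V W g)
      = ((relations A W).comap (TensorProduct.map g g)).map (relations A V).mkQ :=
        Submodule.ker_mapQ ..
    _ = (relations A V ⊔ LinearMap.ker (TensorProduct.map g g)).map (relations A V).mkQ := by
        rw [← map_relations hg, Submodule.comap_map_eq]
    _ = (LinearMap.range (f.lTensor V) ⊔ LinearMap.range (f.rTensor V)).map
          (relations A V).mkQ := by
        rw [Submodule.map_sup, Submodule.mkQ_map_self, bot_sup_eq,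
          TensorProduct.map_ker hfg hg hfg hg]
    _ = LinearMap.range (mulLeft f) := by
        rw [Submodule.map_sup, ← LinearMap.range_comp, ← LinearMap.range_comp,
          range_mkQ_comp_lTensor, mulLeft, sup_idem]

/-- For `r` a retraction of `f : U → V`, the retraction `v ⊗ v' ↦ r v ⊗ v' + r v' ⊗ (v - f (r v))`
of `f ⊗ V : U ⊗ V → V ⊗ V`. The second summand vanishes on the image of `f ⊗ V` and makes the
image of `v ⊗ v' - v' ⊗ v` depend only on `r v` and `r v'`. -/
noncomputable def retraction (f : U →ₗ[A] V) (r : V →ₗ[A] U) : V ⊗[A] V →ₗ[A] U ⊗[A] V :=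
  r.rTensor V +
    TensorProduct.map r (LinearMap.id - f ∘ₗ r) ∘ₗ (TensorProduct.comm A V V).toLinearMap

theorem retraction_tmul (f : U →ₗ[A] V) (r : V →ₗ[A] U) (v v' : V) :
    retraction f r (v ⊗ₜ v') = r v ⊗ₜ v' + r v' ⊗ₜ (v - f (r v)) := by
  simp [retraction]

theorem retraction_sub_swap (f : U →ₗ[A] V) (r : V →ₗ[A] U) (v v' : V) :
    retraction f r (v ⊗ₜ v' - v' ⊗ₜ v) = r v ⊗ₜ f (r v') - r v' ⊗ₜ f (r v) := by
  simp only [map_sub, retraction_tmul, TensorProduct.tmul_sub]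
  abel

theorem retraction_rTensor {f : U →ₗ[A] V} {r : V →ₗ[A] U} (hr : r ∘ₗ f = LinearMap.id)
    (z : U ⊗[A] V) : retraction f r (f.rTensor V z) = z := by
  have hrf (u : U) : r (f u) = u := LinearMap.congr_fun hr u
  have hid : retraction f r ∘ₗ f.rTensor V = LinearMap.id :=
    TensorProduct.ext' fun u v => by simp [retraction_tmul, hrf]
  exact LinearMap.congr_fun hid z

end SymSq

section FourTerm

variable {A U V W : Type*} [CommRing A] [AddCommGroup U] [Module A U]
  [AddCommGroup V] [Module A V] [AddCommGroup W] [Module A W]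
  {f : U →ₗ[A] V} {r : V →ₗ[A] U} {α : ExtPow A U 2 →ₗ[A] U ⊗[A] V}

theorem ExtPow.injective_of_retraction [Module.Projective A U] (hr : r ∘ₗ f = LinearMap.id)
    (hα : ∀ u u', α (wedgeGen A U 2 ![u, u']) = u ⊗ₜ f u' - u' ⊗ₜ f u) :
    Function.Injective α := by
  have hrf (u : U) : r (f u) = u := LinearMap.congr_fun hr u
  have hδ : Function.Injective (r.lTensor U ∘ₗ α) :=
    ExtPow.injective_of_apply_wedgeGen fun x y => by simp [hα, hrf]
  exact Function.Injective.of_comp hδ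

theorem SymSq.exact_mulLeft_of_retraction (hr : r ∘ₗ f = LinearMap.id)
    (hα : ∀ u u', α (wedgeGen A U 2 ![u, u']) = u ⊗ₜ f u' - u' ⊗ₜ f u) :
    Function.Exact α (SymSq.mulLeft f) := by
  refine .of_comp_of_mem_range ?_ fun z hz => ?_
  · have hzero : SymSq.mulLeft f ∘ₗ α = 0 := ExtPow.hom_ext fun u u' => by
      rw [LinearMap.comp_apply, hα, map_sub, LinearMap.zero_apply, sub_eq_zero]
      exact SymSq.mkQ_tmul_comm (f u) (f u')
    exact congrArg DFunLike.coe hzero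
  · have hle : SymSq.relations A V ≤ (LinearMap.range α).comap (SymSq.retraction f r) := by
      rw [Submodule.span_le]
      rintro _ ⟨x, y, rfl⟩
      exact ⟨wedgeGen A U 2 ![r x, r y], by rw [hα, SymSq.retraction_sub_swap]⟩
    have hmem : f.rTensor V z ∈ SymSq.relations A V := (Submodule.Quotient.mk_eq_zero _).mp hz
    exact SymSq.retraction_rTensor hr z ▸ hle hmem

theorem exterior_tensor_sym_four_term_exact_general [Module.Projective A U] {g : V →ₗ[A] W}
    (hsplit : ∃ r : V →ₗ[A] U, r ∘ₗ f = LinearMap.id) (hexact : Function.Exact f g)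
    (hsurj : Function.Surjective g)
    (hα : ∀ u u', α (wedgeGen A U 2 ![u, u']) = u ⊗ₜ f u' - u' ⊗ₜ f u) :
    Function.Injective α ∧ Function.Exact α (SymSq.mulLeft f) ∧
      Function.Exact (SymSq.mulLeft f) (symSqMap A V W g) ∧
      Function.Surjective (symSqMap A V W g) := by
  obtain ⟨r, hr⟩ := hsplit
  exact ⟨ExtPow.injective_of_retraction hr hα, SymSq.exact_mulLeft_of_retraction hr hα,
    SymSq.exact_mulLeft_symSqMap hexact hsurj, SymSq.symSqMap_surjective hsurj⟩

end FourTerm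

/-- Let `A` be a commutative ring and `0 → U →f V →g W → 0` a split short
exact sequence of `A`-modules with `U`, `V`, `W` free.  Then the sequence
`0 → ⋀²_A U → U ⊗_A V → Sym²_A V → Sym²_A W → 0` is exact, where the first map sends
`u ∧ u'` to `u ⊗ f(u') − u' ⊗ f(u)`, the second sends `u ⊗ v` to the class of `f(u) ⊗ v`,
and the third is induced by `g ⊗ g`. -/
theorem exterior_tensor_sym_four_term_exact
    (A : Type*) [CommRing A] (U V W : Type*)
    [AddCommGroup U] [Module A U] [AddCommGroup V] [Module A V]
    [AddCommGroup W] [Module A W]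
    [Module.Free A U] [Module.Free A V] [Module.Free A W]
    (f : U →ₗ[A] V) (g : V →ₗ[A] W)
    (hinj : Function.Injective f) (hexact : LinearMap.ker g = LinearMap.range f)
    (hsurj : Function.Surjective g)
    (hsplit : ∃ s : W →ₗ[A] V, g.comp s = LinearMap.id)
    (α : ExtPow A U 2 →ₗ[A] (U ⊗[A] V))
    (hα : ∀ u u' : U,
      α (wedgeGen A U 2 ![u, u']) = u ⊗ₜ[A] f u' - u' ⊗ₜ[A] f u) :
    Function.Injective α ∧
      LinearMap.ker ((Submodule.mkQ
          (Submodule.span A {z : V ⊗[A] V | ∃ x y : V, z = x ⊗ₜ[A] y - y ⊗ₜ[A] x})).comp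
            (LinearMap.rTensor V f)) = LinearMap.range α ∧
      LinearMap.ker (symSqMap A V W g) =
        LinearMap.range ((Submodule.mkQ
          (Submodule.span A {z : V ⊗[A] V | ∃ x y : V, z = x ⊗ₜ[A] y - y ⊗ₜ[A] x})).comp
            (LinearMap.rTensor V f)) ∧
      Function.Surjective (symSqMap A V W g) := by
  have hfg : Function.Exact f g := LinearMap.exact_iff.mpr hexact
  have hretr := ((hfg.split_tfae'.out 0 1 rfl rfl).mp ⟨hinj, hsplit⟩).2
  simpa only [LinearMap.exact_iff, SymSq.mulLeft] using
    exterior_tensor_sym_four_term_exact_general hretr hfg hsurj hα
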